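/- Let G be a finite connected simple graph on vertex set V with nonnegative edge weights w, let x̄ : V → {0,1} with nonempty facility set F = {k ∈ V : x̄(k) = 1}, let i ∈ V, and let M ∈ ℝ satisfy M ≥ min_{j ∈ F} d_w(k,j) for every k ∈ V. Then the optimal value of the dual formulation — the supremum of π(i) − π(t) − ∑_{k ∈ V} x̄(k)·μ(k) over pairs (π, μ) with π : V ∪ {t} → ℝ, μ : V → ℝ, μ ≥ 0, π(k) ≤ π(l) + w({k,l}) and π(l) ≤ π(k) + w({k,l}) for every edge {k,l}, and π(k) ≤ π(t) + μ(k) for every k ∈ V — equals the optimal value of the formulation SP^i, namely the supremum of π(i) over nonnegative π : V → ℝ satisfying π(k) ≤ π(l) + w({k,l}) and π(l) ≤ π(k) + w({k,l}) for every edge {k,l} and π(k) ≤ M·(1 − x̄(k)) for all k. -/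

import Mathlib

open SimpleGraph

/-- The weighted distance between `i` and `j`: the infimum (`sInf` in `ℝ`) of the
weighted lengths of all walks from `i` to `j`. -/
noncomputable def gdist {V : Type*} (G : SimpleGraph V) (w : Sym2 V → ℝ) (i j : V) : ℝ :=
  sInf {L : ℝ | ∃ p : G.Walk i j, (p.edges.map w).sum = L}

/-!
Both optimal values equal the distance `D i` from `i` to the nearest facility. The function `D` is
itself a node potential that vanishes on the facilities, so it is feasible for `SP^i`, and
`(D, 0, D)` is feasible for the dual formulation with all terms `x k * μ k` equal to zero.
Conversely, a potential at most `c` on the facilities is at most `c + D i` at `i`: follow a walk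
from `i` to a nearest facility. For `SP^i` one takes `c = 0`, for the dual formulation
`c = πt + ∑ k, x k * μ k`.
-/

section

variable {V : Type*} {G : SimpleGraph V} {w : Sym2 V → ℝ}

/-- A node potential for the edge weights `w`: a dual feasible function of the shortest-path
problem. Adjacency being symmetric, the inequality holds in both directions along every edge. -/
def IsPotential (G : SimpleGraph V) (w : Sym2 V → ℝ) (π : V → ℝ) : Prop :=
  ∀ k l, G.Adj k l → π k ≤ π l + w s(k, l)

namespace IsPotential

theorem le_add_sum_edges {π : V → ℝ} (hπ : IsPotential G w π) {i j : V} (p : G.Walk i j) :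
    π i ≤ π j + (p.edges.map w).sum := by
  induction p with
  | nil => simp
  | cons hadj p ih =>
    rw [Walk.edges_cons, List.map_cons, List.sum_cons]
    linarith [hπ _ _ hadj]

theorem le_add_gdist {π : V → ℝ} (hπ : IsPotential G w π) {i j : V} (hij : G.Reachable i j) :
    π i ≤ π j + gdist G w i j := by
  rw [← sub_le_iff_le_add']
  refine le_csInf (hij.elim fun p => ⟨_, p, rfl⟩) ?_
  rintro _ ⟨p, rfl⟩
  exact sub_le_iff_le_add'.2 (hπ.le_add_sum_edges p)

protected theorem inf' {ι : Type*} {s : Finset ι} (hs : s.Nonempty) {f : ι → V → ℝ}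
    (hf : ∀ j ∈ s, IsPotential G w (f j)) : IsPotential G w fun k => s.inf' hs fun j => f j k := by
  intro k l hkl
  obtain ⟨j, hj, hmin⟩ := s.exists_mem_eq_inf' hs fun j => f j l
  calc
    s.inf' hs (fun j => f j k) ≤ f j k := Finset.inf'_le _ hj
    _ ≤ f j l + w s(k, l) := hf j hj k l hkl
    _ = s.inf' hs (fun j => f j l) + w s(k, l) := by rw [hmin]

end IsPotential

theorem sum_edges_nonneg (hw : ∀ e ∈ G.edgeSet, 0 ≤ w e) {i j : V} (p : G.Walk i j) :
    0 ≤ (p.edges.map w).sum :=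
  List.sum_nonneg <| List.forall_mem_map.2 fun e he => hw e (p.edges_subset_edgeSet he)

theorem gdist_nonneg (hw : ∀ e ∈ G.edgeSet, 0 ≤ w e) (i j : V) : 0 ≤ gdist G w i j := by
  refine Real.sInf_nonneg ?_
  rintro _ ⟨p, rfl⟩
  exact sum_edges_nonneg hw p

theorem gdist_le_sum_edges (hw : ∀ e ∈ G.edgeSet, 0 ≤ w e) {i j : V} (p : G.Walk i j) :
    gdist G w i j ≤ (p.edges.map w).sum := by
  refine csInf_le ⟨0, ?_⟩ ⟨p, rfl⟩
  rintro _ ⟨q, rfl⟩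
  exact sum_edges_nonneg hw q

theorem gdist_self (hw : ∀ e ∈ G.edgeSet, 0 ≤ w e) (i : V) : gdist G w i i = 0 :=
  le_antisymm (by simpa using gdist_le_sum_edges hw (Walk.nil : G.Walk i i)) (gdist_nonneg hw i i)

theorem gdist_le_gdist_add_of_adj (hw : ∀ e ∈ G.edgeSet, 0 ≤ w e) {k l j : V} (hkl : G.Adj k l)
    (hlj : G.Reachable l j) : gdist G w k j ≤ gdist G w l j + w s(k, l) := by
  rw [← sub_le_iff_le_add]
  refine le_csInf (hlj.elim fun p => ⟨_, p, rfl⟩) ?_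
  rintro _ ⟨p, rfl⟩
  have hcons := gdist_le_sum_edges hw (Walk.cons hkl p)
  rw [Walk.edges_cons, List.map_cons, List.sum_cons] at hcons
  linarith

theorem isPotential_gdist (hG : G.Preconnected) (hw : ∀ e ∈ G.edgeSet, 0 ≤ w e) (j : V) :
    IsPotential G w fun k => gdist G w k j :=
  fun _ l hkl => gdist_le_gdist_add_of_adj hw hkl (hG l j)

section Facility

/-- The weighted distance `min_{j ∈ F} d_w(k, j)` from `k` to the nearest facility, which is the
common optimal value of the two formulations. -/
noncomputable def facilityDist (G : SimpleGraph V) (w : Sym2 V → ℝ) {F : Finset V} (hF : F.Nonempty)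
    (k : V) : ℝ :=
  F.inf' hF fun j => gdist G w k j

variable {F : Finset V} (hF : F.Nonempty)

theorem facilityDist_nonneg (hw : ∀ e ∈ G.edgeSet, 0 ≤ w e) (k : V) : 0 ≤ facilityDist G w hF k :=
  Finset.le_inf' _ _ fun j _ => gdist_nonneg hw k j

theorem facilityDist_eq_zero_of_mem (hw : ∀ e ∈ G.edgeSet, 0 ≤ w e) {k : V} (hk : k ∈ F) :
    facilityDist G w hF k = 0 :=
  le_antisymm ((Finset.inf'_le _ hk).trans_eq (gdist_self hw k)) (facilityDist_nonneg hF hw k)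

theorem isPotential_facilityDist (hG : G.Preconnected) (hw : ∀ e ∈ G.edgeSet, 0 ≤ w e) :
    IsPotential G w (facilityDist G w hF) :=
  .inf' hF fun j _ => isPotential_gdist hG hw j

theorem IsPotential.le_add_facilityDist {π : V → ℝ} (hπ : IsPotential G w π)
    (hG : G.Preconnected) {c : ℝ} (hc : ∀ j ∈ F, π j ≤ c) (i : V) :
    π i ≤ c + facilityDist G w hF i := by
  rw [← sub_le_iff_le_add']
  refine Finset.le_inf' _ _ fun j hj => ?_
  linarith [hπ.le_add_gdist (hG i j), hc j hj]

end Facility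

section Formulations

/-- The objective values attained in the dual formulation, with sink potential `πt` and
multipliers `μ`. The sum is a `finsum` so that `V` may be infinite; it takes its junk value `0`
only if `x k * μ k ≠ 0` for infinitely many `k`, which finitely many facilities exclude. -/
def dualValues (G : SimpleGraph V) (w : Sym2 V → ℝ) (x : V → ℝ) (i : V) : Set ℝ :=
  {y | ∃ π : V → ℝ, ∃ πt : ℝ, ∃ μ : V → ℝ, (∀ k, 0 ≤ μ k) ∧ IsPotential G w π ∧
    (∀ k, π k ≤ πt + μ k) ∧ y = π i - πt - ∑ᶠ k, x k * μ k}

/-- The objective values attained in the formulation `SP^i`, where the big-M constraints force the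
potential to vanish at the facilities. -/
def bigMValues (G : SimpleGraph V) (w : Sym2 V → ℝ) (x : V → ℝ) (M : ℝ) (i : V) : Set ℝ :=
  {y | ∃ π : V → ℝ, (∀ k, 0 ≤ π k) ∧ IsPotential G w π ∧ (∀ k, π k ≤ M * (1 - x k)) ∧ π i = y}

variable {x : V → ℝ} {F : Finset V}

theorem finsum_mul_eq_sum_facilities (hx01 : ∀ k, x k = 0 ∨ x k = 1)
    (hFx : ∀ k, k ∈ F ↔ x k = 1) (μ : V → ℝ) : ∑ᶠ k, x k * μ k = ∑ k ∈ F, μ k := by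
  have hsupp : (Function.support fun k => x k * μ k) ⊆ F := fun k hk =>
    (hFx k).2 ((hx01 k).resolve_left (left_ne_zero_of_mul hk))
  rw [finsum_eq_sum_of_support_subset _ hsupp]
  exact Finset.sum_congr rfl fun k hk => by rw [(hFx k).1 hk, one_mul]

theorem isGreatest_dualValues (hG : G.Preconnected) (hw : ∀ e ∈ G.edgeSet, 0 ≤ w e)
    (hx01 : ∀ k, x k = 0 ∨ x k = 1) (hFx : ∀ k, k ∈ F ↔ x k = 1) (hF : F.Nonempty) (i : V) :
    IsGreatest (dualValues G w x i) (facilityDist G w hF i) := by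
  constructor
  · refine ⟨facilityDist G w hF, 0, facilityDist G w hF, facilityDist_nonneg hF hw,
      isPotential_facilityDist hF hG hw, fun k => (zero_add _).ge, ?_⟩
    rw [finsum_mul_eq_sum_facilities hx01 hFx,
      Finset.sum_eq_zero fun k hk => facilityDist_eq_zero_of_mem hF hw hk, sub_zero, sub_zero]
  · rintro _ ⟨π, πt, μ, hμ, hπ, hsink, rfl⟩
    have hfac : ∀ j ∈ F, π j ≤ πt + ∑ k ∈ F, μ k := fun j hj =>
      (hsink j).trans (by gcongr; exact Finset.single_le_sum (fun k _ => hμ k) hj)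
    rw [finsum_mul_eq_sum_facilities hx01 hFx, sub_sub, sub_le_iff_le_add']
    exact hπ.le_add_facilityDist hF hG hfac i

theorem isGreatest_bigMValues (hG : G.Preconnected) (hw : ∀ e ∈ G.edgeSet, 0 ≤ w e)
    (hx01 : ∀ k, x k = 0 ∨ x k = 1) (hFx : ∀ k, k ∈ F ↔ x k = 1) (hF : F.Nonempty) (i : V)
    {M : ℝ} (hM : ∀ k, facilityDist G w hF k ≤ M) :
    IsGreatest (bigMValues G w x M i) (facilityDist G w hF i) := by
  constructor
  · refine ⟨facilityDist G w hF, facilityDist_nonneg hF hw, isPotential_facilityDist hF hG hw,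
      fun k => ?_, rfl⟩
    rcases hx01 k with hk | hk
    · simpa [hk] using hM k
    · simp [hk, facilityDist_eq_zero_of_mem hF hw ((hFx k).2 hk)]
  · rintro _ ⟨π, -, hπ, hbigM, rfl⟩
    have hfac : ∀ j ∈ F, π j ≤ 0 := fun j hj => by simpa [(hFx j).1 hj] using hbigM j
    simpa using hπ.le_add_facilityDist hF hG hfac i

end Formulations

end

theorem stmt11_general {V : Type*} {G : SimpleGraph V} (hG : G.Preconnected) {w : Sym2 V → ℝ}
    (hw : ∀ e ∈ G.edgeSet, 0 ≤ w e) {x : V → ℝ} (hx01 : ∀ k, x k = 0 ∨ x k = 1)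
    {F : Finset V} (hFx : ∀ k, k ∈ F ↔ x k = 1) (hF : F.Nonempty) (i : V) {M : ℝ}
    (hM : ∀ k, facilityDist G w hF k ≤ M) :
    sSup (dualValues G w x i) = sSup (bigMValues G w x M i) :=
  (isGreatest_dualValues hG hw hx01 hFx hF i).csSup_eq.trans
    (isGreatest_bigMValues hG hw hx01 hFx hF i hM).csSup_eq.symm

/-- The optimal value of the dual formulation (with auxiliary sink variable `πt` and
multipliers `μ`) equals the optimal value of the formulation `SP^i` with big-M
constraints, provided `M ≥ min_{j ∈ F} d_w(k,j)` for every vertex `k`. -/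
theorem stmt11 {V : Type*} [Fintype V] (G : SimpleGraph V) (hG : G.Connected)
    (w : Sym2 V → ℝ) (hw : ∀ e ∈ G.edgeSet, 0 ≤ w e)
    (x : V → ℝ) (hx01 : ∀ k, x k = 0 ∨ x k = 1)
    (F : Finset V) (hFx : ∀ k, k ∈ F ↔ x k = 1) (hF : F.Nonempty)
    (i : V) (M : ℝ) (hM : ∀ k, F.inf' hF (fun j => gdist G w k j) ≤ M) :
    sSup {y : ℝ | ∃ π : V → ℝ, ∃ πt : ℝ, ∃ μ : V → ℝ,
        (∀ k, 0 ≤ μ k) ∧ (∀ k l, G.Adj k l → π k ≤ π l + w s(k, l)) ∧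
        (∀ k, π k ≤ πt + μ k) ∧ y = π i - πt - ∑ k : V, x k * μ k} =
      sSup {y : ℝ | ∃ π : V → ℝ, (∀ k, 0 ≤ π k) ∧
        (∀ k l, G.Adj k l → π k ≤ π l + w s(k, l)) ∧
        (∀ k, π k ≤ M * (1 - x k)) ∧ π i = y} := by
  simpa only [dualValues, bigMValues, IsPotential, finsum_eq_sum_of_fintype] using
    stmt11_general hG.preconnected hw hx01 hFx hF i hM
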